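/- Let ε ∈ (0,1) be irrational, let ℓ satisfy max{ε,1−ε} < ℓ < 1, let x0 ∈ [0,ℓ), and let u = u_{ε,ℓ,x0} be the corresponding 3iet word. Then σ01(u) and σ10(u) are Sturmian words of slope ε; in particular each of σ01(u) and σ10(u) has the same set of factors as the Sturmian word u_{ε,x} for every x ∈ [0,1). -/

import Mathlib

/-- The alphabet of 3iet words. -/
inductive L3 | A | B | C
deriving DecidableEq, Inhabited

/-- The three-interval exchange transformation `T_{ε,ℓ}`. -/
noncomputable def T3 (ε ℓ : ℝ) (x : ℝ) : ℝ :=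
  if x < ℓ - 1 + ε then x + 1 - ε
  else if x < ε then x + 1 - 2*ε
  else x - ε

/-- The 3iet word `u_{ε,ℓ,x0}` coding the orbit of `x0` under `T_{ε,ℓ}`. -/
noncomputable def u3 (ε ℓ x0 : ℝ) (n : ℕ) : L3 :=
  if (T3 ε ℓ)^[n] x0 < ℓ - 1 + ε then L3.A
  else if (T3 ε ℓ)^[n] x0 < ε then L3.B
  else L3.C

/-- The two-interval exchange transformation `T_ε`. -/
noncomputable def T2 (ε : ℝ) (x : ℝ) : ℝ := if x < ε then x + 1 - ε else x - ε

/-- The Sturmian word `u_{ε,x0}` of slope `ε` coding the orbit of `x0` under `T_ε`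
(letter `0` is `false`, letter `1` is `true`). -/
noncomputable def u2 (ε x0 : ℝ) (n : ℕ) : Bool := if (T2 ε)^[n] x0 < ε then false else true

/-- `w` is a factor of the infinite word `u`. -/
def IsFactor {α : Type*} (w : List α) (u : ℕ → α) : Prop :=
  ∃ i : ℕ, w = (List.range w.length).map fun j => u (i + j)

/-- The prefix of length `m` of the periodic infinite word `www⋯`;
for `|w| ≤ m` this is the fractional power `w^{m/|w|}`. -/
def powPrefix {α : Type*} [Inhabited α] (w : List α) (m : ℕ) : List α :=
  (List.range m).map fun j => w.getD (j % w.length) default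

/-- The index of the factor `w` in the infinite word `u`:
`sup {r ∈ ℚ, r ≥ 1, r|w| ∈ ℕ | w^r is a factor of u}`, as an element of `ℝ ∪ {+∞}`. -/
noncomputable def factorIndex {α : Type*} [Inhabited α] (u : ℕ → α) (w : List α) : EReal :=
  sSup {x : EReal | ∃ m : ℕ, w.length ≤ m ∧ IsFactor (powPrefix w m) u ∧
    x = (((m : ℝ) / (w.length : ℝ) : ℝ) : EReal)}

/-- The index of the infinite word `u`: `sup {ind(w) | w a nonempty factor of u}`. -/
noncomputable def wordIndex {α : Type*} [Inhabited α] (u : ℕ → α) : EReal :=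
  sSup {x : EReal | ∃ w : List α, w ≠ [] ∧ IsFactor w u ∧ x = factorIndex u w}

/-- The Gauss map `x ↦ {1/x}`. -/
noncomputable def gaussMap (x : ℝ) : ℝ := Int.fract x⁻¹

/-- `cfa ε n` is the partial quotient `a_{n+1}` of the continued fraction
expansion `ε = [0; a₁, a₂, a₃, …]` of the irrational `ε ∈ (0,1)`. -/
noncomputable def cfa (ε : ℝ) (n : ℕ) : ℕ := ⌊(gaussMap^[n] ε)⁻¹⌋₊

/-- The morphism `σ01 : A ↦ 0, B ↦ 01, C ↦ 1`. -/
def sigma01 : L3 → List Bool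
  | L3.A => [false]
  | L3.B => [false, true]
  | L3.C => [true]

/-- The morphism `σ10 : A ↦ 0, B ↦ 10, C ↦ 1`. -/
def sigma10 : L3 → List Bool
  | L3.A => [false]
  | L3.B => [true, false]
  | L3.C => [true]

/-- The image `φ(u₀)φ(u₁)φ(u₂)⋯` of an infinite word `u` under a (nonerasing) morphism `φ`. -/
def morphWord (φ : L3 → List Bool) (u : ℕ → L3) (m : ℕ) : Bool :=
  ((List.range (m+1)).flatMap fun k => φ (u k)).getD m false

/-- `u` is a uniformly recurrent infinite word: every factor occurs infinitely often
with bounded gaps (every window of some length `R` contains an occurrence). -/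
def UniformlyRecurrent {α : Type*} (u : ℕ → α) : Prop :=
  ∀ w : List α, IsFactor w u → ∃ R : ℕ, ∀ i : ℕ, ∃ j : ℕ, i ≤ j ∧ j < i + R ∧
    w = (List.range w.length).map fun t => u (j + t)

/-- `u` is eventually periodic. -/
def EventuallyPeriodic {α : Type*} (u : ℕ → α) : Prop :=
  ∃ N p : ℕ, 0 < p ∧ ∀ n : ℕ, N ≤ n → u (n + p) = u n

/-- The standard words of `ε = [0; a₁, a₂, …]`, with the index shifted by one:
`sw ε 0 = s₋₁ = 1`, `sw ε 1 = s₀ = 0`, `sw ε 2 = s₁ = s₀^{a₁-1} s₋₁`, and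
`sw ε (n+3) = s_{n+2} = s_{n+1}^{a_{n+2}} s_n`. -/
noncomputable def sw (ε : ℝ) : ℕ → List Bool
  | 0 => [true]
  | 1 => [false]
  | 2 => (List.replicate (cfa ε 0 - 1) ([false] : List Bool)).flatten ++ [true]
  | (n+3) => (List.replicate (cfa ε (n+1)) (sw ε (n+2))).flatten ++ sw ε (n+1)

/-- Denominators of the convergents of `ε`, shifted by one: `qq ε 0 = q₋₁ = 0`,
`qq ε 1 = q₀ = 1`, and `qq ε (n+2) = q_{n+1} = a_{n+1} q_n + q_{n-1}`. -/
noncomputable def qq (ε : ℝ) : ℕ → ℕ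
  | 0 => 0
  | 1 => 1
  | (n+2) => cfa ε n * qq ε (n+1) + qq ε n

/-- `u` is a 3iet word. -/
def Is3ietWord (u : ℕ → L3) : Prop :=
  ∃ ε ℓ x0 : ℝ, Irrational ε ∧ 0 < ε ∧ ε < 1 ∧ max ε (1 - ε) < ℓ ∧ ℓ < 1 ∧
    x0 ∈ Set.Ico 0 ℓ ∧ u = u3 ε ℓ x0

/-- `v` is a Sturmian word. -/
def IsSturmianWord (v : ℕ → Bool) : Prop :=
  ∃ ε x0 : ℝ, Irrational ε ∧ 0 < ε ∧ ε < 1 ∧ x0 ∈ Set.Ico (0:ℝ) 1 ∧ v = u2 ε x0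

/-- The infinite binary word `v1` is amicable with `v2` (`v1 ∝ v2`). -/
def AmicableInf (v1 v2 : ℕ → Bool) : Prop :=
  ∃ w : ℕ → L3, v1 = morphWord sigma01 w ∧ v2 = morphWord sigma10 w

/-- The morphism `Φ_k : A ↦ 0, B ↦ 01^{k+1}, C ↦ 01^k`. -/
def Phi (k : ℕ) : L3 → List Bool
  | L3.A => [false]
  | L3.B => false :: List.replicate (k+1) true
  | L3.C => false :: List.replicate k true

/-- The infinite word `B₀B₁B₂⋯` obtained by concatenating the sequence of
(nonempty) blocks `B`. -/
def concatOfBlocks (B : ℕ → List Bool) (m : ℕ) : Bool :=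
  ((List.range (m+1)).flatMap B).getD m false

/-!
`T_ε` is the rotation by `-ε` of the circle `ℝ / ℤ`, and `T_{ε,ℓ}` is the map it induces on an
interval of length `ℓ`, with return time `1` on `I_A` and `I_C` and `2` on `I_B`. If the interval
is `[0, ℓ)`, the excursion of a point of `I_B` reads `01`, whence `σ01(u_{ε,ℓ,x0}) = u_{ε,x0}`. If
it is `[1 - ℓ, 1)`, identified with `[0, ℓ)` by a translation, that excursion reads `10`, whence
`σ10(u_{ε,ℓ,x0}) = u_{ε,x0+1-ℓ}`.

The factors of `u_{ε,x}` do not depend on `x`: since `T_ε` is continuous and increasing from the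
right, the points whose coding begins like that of `z` include a right neighbourhood of `z`, and
this neighbourhood is visited by every orbit because the rotation is irrational.
-/

open Filter Set Topology

section Itinerary

variable {X Y α : Type*}

/-- The infinite word coding the orbit of `x` under `T` when each point is labelled by `c`. The
words `u_{ε,x}` and `u_{ε,ℓ,x}` are definitionally of this form. -/
def itinerary (T : X → X) (c : X → α) (x : X) (n : ℕ) : α := c (T^[n] x)

lemma itinerary_iterate (T : X → X) (c : X → α) (x : X) (i j : ℕ) :
    itinerary T c (T^[i] x) j = itinerary T c x (i + j) := by
  rw [itinerary, itinerary, Nat.add_comm, Function.iterate_add_apply]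

/-- The orbit of `x` under `T` reaches `y` after `w.length` steps, and the labels `c` met on the
way, that of `x` included and that of `y` excluded, spell the word `w`. -/
def Spells (T : X → X) (c : X → α) : X → List α → X → Prop
  | x, [], y => x = y
  | x, a :: w, y => c x = a ∧ Spells T c (T x) w y

lemma spells_nil_iff {T : X → X} {c : X → α} {x y : X} : Spells T c x [] y ↔ x = y := Iff.rfl

lemma Spells.append {T : X → X} {c : X → α} {v w : List α} {x y z : X}
    (hv : Spells T c x v y) (hw : Spells T c y w z) : Spells T c x (v ++ w) z := by
  induction v generalizing x with
  | nil => exact hv ▸ hw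
  | cons a v ih => exact ⟨hv.1, ih hv.2⟩

lemma Spells.getElem_eq_itinerary {T : X → X} {c : X → α} {w : List α} {x y : X}
    (hw : Spells T c x w y) {n : ℕ} (hn : n < w.length) : w[n] = itinerary T c x n := by
  induction w generalizing x n with
  | nil => simp at hn
  | cons a w ih =>
    cases n with
    | zero => exact hw.1.symm
    | succ n => exact ih hw.2 (Nat.lt_of_succ_lt_succ hn)

lemma le_length_flatMap_range {f : ℕ → List α} (hf : ∀ k, f k ≠ []) (n : ℕ) :
    n ≤ ((List.range n).flatMap f).length := by
  induction n with
  | zero => exact Nat.zero_le _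
  | succ n ih =>
    rw [List.range_succ, List.flatMap_append, List.length_append, List.flatMap_singleton]
    exact Nat.add_le_add ih (List.length_pos_of_ne_nil (hf n))

lemma Spells.flatMap_range_itinerary {β : Type*} {T : X → X} {c : X → α} {S : Y → Y} {d : Y → β}
    {π : Y → X} {φ : β → List α} (h : ∀ y, Spells T c (π y) (φ (d y)) (π (S y))) (y : Y) (n : ℕ) :
    Spells T c (π y) ((List.range n).flatMap fun k => φ (itinerary S d y k)) (π (S^[n] y)) := by
  induction n with
  | zero => exact rfl
  | succ n ih =>
    rw [List.range_succ, List.flatMap_append, List.flatMap_singleton, Function.iterate_succ_apply']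
    exact ih.append (h _)

theorem morphWord_itinerary {T : X → X} {c : X → Bool} {S : Y → Y} {d : Y → L3} {π : Y → X}
    {φ : L3 → List Bool} (hφ : ∀ a, φ a ≠ [])
    (h : ∀ y, Spells T c (π y) (φ (d y)) (π (S y))) (y : Y) :
    morphWord φ (itinerary S d y) = itinerary T c (π y) := by
  funext m
  have hm : m < ((List.range (m + 1)).flatMap fun k => φ (itinerary S d y k)).length :=
    le_length_flatMap_range (fun k => hφ _) (m + 1)
  rw [morphWord, List.getD_eq_getElem _ _ hm]
  exact (Spells.flatMap_range_itinerary h y (m + 1)).getElem_eq_itinerary hm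

variable {T : X → X} {c : X → α} {F : X → Filter X}

-- The filters `F` are abstract because interval exchanges and their labels are not continuous: they
-- satisfy the two hypotheses for `F z = 𝓝[≥] z`, not for `F z = 𝓝 z`.
lemma eventually_itinerary_eq (hT : ∀ z, Tendsto T (F z) (F (T z)))
    (hc : ∀ z, ∀ᶠ y in F z, c y = c z) (z : X) (n : ℕ) :
    ∀ᶠ y in F z, itinerary T c y n = itinerary T c z n := by
  induction n generalizing z with
  | zero => exact hc z
  | succ n ih => exact (hT z).eventually (ih (T z))

theorem isFactor_itinerary_of_frequently (hT : ∀ z, Tendsto T (F z) (F (T z)))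
    (hc : ∀ z, ∀ᶠ y in F z, c y = c z) {x y : X}
    (hxy : ∀ i, ∃ᶠ p in F (T^[i] y), ∃ k, T^[k] x = p) {w : List α}
    (hw : IsFactor w (itinerary T c y)) : IsFactor w (itinerary T c x) := by
  obtain ⟨i, hi⟩ := hw
  have hagree : ∀ᶠ p in F (T^[i] y),
      ∀ j ∈ Finset.range w.length, itinerary T c p j = itinerary T c (T^[i] y) j :=
    (Finset.eventually_all _).2 fun j _ => eventually_itinerary_eq hT hc _ j
  obtain ⟨_, ⟨k, rfl⟩, hk⟩ := ((hxy i).and_eventually hagree).exists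
  refine ⟨k, hi.trans (List.map_congr_left fun j hj => ?_)⟩
  rw [← itinerary_iterate, ← itinerary_iterate]
  exact (hk j (Finset.mem_range.2 (List.mem_range.1 hj))).symm

end Itinerary

lemma eventually_nhdsGE_lt_iff_lt {α : Type*} [LinearOrder α] [TopologicalSpace α]
    [ClosedIciTopology α] (a z : α) : ∀ᶠ y in 𝓝[≥] z, (y < a ↔ z < a) := by
  rcases lt_or_ge z a with hz | hz
  · filter_upwards [nhdsWithin_le_nhds (eventually_lt_nhds hz)] with y hy
    exact iff_of_true hy hz
  · filter_upwards [self_mem_nhdsWithin] with y hy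
    exact iff_of_false (hz.trans hy).not_gt hz.not_gt

section TwoIntervalExchange

variable {ε x y : ℝ}

/-- The letter of `{0,1}` labelling the interval of `T_ε` that contains `x`. -/
noncomputable def letter2 (ε x : ℝ) : Bool := if x < ε then false else true

lemma Spells.cons_false {w : List Bool} (hx : x < ε)
    (hw : Spells (T2 ε) (letter2 ε) (x + 1 - ε) w y) :
    Spells (T2 ε) (letter2 ε) x (false :: w) y :=
  ⟨if_pos hx, by rwa [T2, if_pos hx]⟩

lemma Spells.cons_true {w : List Bool} (hx : ε ≤ x)
    (hw : Spells (T2 ε) (letter2 ε) (x - ε) w y) :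
    Spells (T2 ε) (letter2 ε) x (true :: w) y :=
  ⟨if_neg hx.not_gt, by rwa [T2, if_neg hx.not_gt]⟩

lemma mapsTo_T2_Ico (h0 : 0 ≤ ε) (h1 : ε ≤ 1) : MapsTo (T2 ε) (Ico 0 1) (Ico 0 1) := by
  rintro x ⟨hx0, hx1⟩
  rw [T2]
  split_ifs <;> constructor <;> linarith

lemma eventually_nhdsGE_letter2_eq (ε z : ℝ) : ∀ᶠ y in 𝓝[≥] z, letter2 ε y = letter2 ε z := by
  filter_upwards [eventually_nhdsGE_lt_iff_lt ε z] with y hy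
  simp only [letter2, hy]

lemma tendsto_T2_nhdsGE (ε z : ℝ) : Tendsto (T2 ε) (𝓝[≥] z) (𝓝[≥] (T2 ε z)) := by
  have htranslation : (fun y => y + (T2 ε z - z)) =ᶠ[𝓝[≥] z] T2 ε := by
    filter_upwards [eventually_nhdsGE_lt_iff_lt ε z] with y hy
    simp only [T2, hy]
    split_ifs <;> ring
  refine Tendsto.congr' htranslation (tendsto_nhdsWithin_iff.2 ⟨?_, ?_⟩)
  · have hcont : ContinuousWithinAt (fun y => y + (T2 ε z - z)) (Ici z) z := by fun_prop
    simpa only [ContinuousWithinAt, add_sub_cancel] using hcont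
  · filter_upwards [self_mem_nhdsWithin] with y hy
    rw [mem_Ici] at hy ⊢
    linarith

lemma coe_T2 (ε x : ℝ) : (T2 ε x : UnitAddCircle) = x + (-ε : ℝ) := by
  rw [T2]
  split_ifs
  · rw [← AddCircle.coe_add, add_sub_right_comm, AddCircle.coe_add_period, sub_eq_add_neg]
  · rw [← AddCircle.coe_add, sub_eq_add_neg]

lemma coe_iterate_T2 (ε x : ℝ) (k : ℕ) :
    (((T2 ε)^[k] x : ℝ) : UnitAddCircle) = x + k • ((-ε : ℝ) : UnitAddCircle) := by
  induction k with
  | zero => rw [Function.iterate_zero_apply, zero_nsmul, add_zero]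
  | succ k ih => rw [Function.iterate_succ_apply', coe_T2, ih, succ_nsmul, add_assoc]

lemma denseRange_coe_iterate_T2 (hε : Irrational ε) (x : ℝ) :
    DenseRange fun k : ℕ => (((T2 ε)^[k] x : ℝ) : UnitAddCircle) := by
  have hmultiples : DenseRange fun k : ℕ => k • ((-ε : ℝ) : UnitAddCircle) := by
    rw [← denseRange_zsmul_iff_nsmul, AddCircle.denseRange_zsmul_coe_iff, div_one]
    exact hε.neg
  simp only [coe_iterate_T2]
  exact (Homeomorph.addLeft (x : UnitAddCircle)).surjective.denseRange.comp hmultiples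
    (Homeomorph.addLeft _).continuous

lemma exists_iterate_T2_mem (hε : Irrational ε) (h0 : 0 ≤ ε) (h1 : ε ≤ 1) (hx : x ∈ Ico 0 1)
    {U : Set ℝ} (hU : IsOpen U) (hne : U.Nonempty) (hsub : U ⊆ Ico 0 1) :
    ∃ k, (T2 ε)^[k] x ∈ U := by
  obtain ⟨k, t, ht, htk⟩ := (denseRange_coe_iterate_T2 hε x).exists_mem_open
    (QuotientAddGroup.isOpenMap_coe U hU) (hne.image _)
  have horbit : (T2 ε)^[k] x ∈ Ico 0 1 := (mapsTo_T2_Ico h0 h1).iterate k hx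
  have heq : t = (T2 ε)^[k] x := by
    refine (AddCircle.coe_eq_coe_iff_of_mem_Ico (p := 1) (a := 0) ?_ ?_).1 htk
    · simpa only [zero_add] using hsub ht
    · simpa only [zero_add] using horbit
  exact ⟨k, heq ▸ ht⟩

lemma frequently_nhdsGT_exists_iterate_T2_eq (hε : Irrational ε) (h0 : 0 ≤ ε) (h1 : ε ≤ 1)
    (hx : x ∈ Ico 0 1) (hy : y ∈ Ico 0 1) : ∃ᶠ p in 𝓝[>] y, ∃ k, (T2 ε)^[k] x = p := by
  rw [(nhdsGT_basis y).frequently_iff]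
  intro b hb
  obtain ⟨k, hk⟩ := exists_iterate_T2_mem hε h0 h1 hx (isOpen_Ioo (a := y) (b := min b 1))
    (nonempty_Ioo.2 (lt_min hb hy.2))
    fun p hp => ⟨hy.1.trans hp.1.le, hp.2.trans_le (min_le_right _ _)⟩
  exact ⟨_, ⟨hk.1, hk.2.trans_le (min_le_left _ _)⟩, k, rfl⟩

lemma IsFactor.u2_of_u2 (hε : Irrational ε) (h0 : 0 ≤ ε) (h1 : ε ≤ 1) (hx : x ∈ Ico 0 1)
    (hy : y ∈ Ico 0 1) {w : List Bool} (hw : IsFactor w (u2 ε y)) : IsFactor w (u2 ε x) :=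
  isFactor_itinerary_of_frequently (tendsto_T2_nhdsGE ε) (eventually_nhdsGE_letter2_eq ε)
    (fun i => (frequently_nhdsGT_exists_iterate_T2_eq hε h0 h1 hx
      ((mapsTo_T2_Ico h0 h1).iterate i hy)).filter_mono (nhdsWithin_mono _ Ioi_subset_Ici_self)) hw

theorem isFactor_u2_iff (hε : Irrational ε) (h0 : 0 ≤ ε) (h1 : ε ≤ 1) (hx : x ∈ Ico 0 1)
    (hy : y ∈ Ico 0 1) (w : List Bool) : IsFactor w (u2 ε y) ↔ IsFactor w (u2 ε x) :=
  ⟨.u2_of_u2 hε h0 h1 hx hy, .u2_of_u2 hε h0 h1 hy hx⟩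

end TwoIntervalExchange

section ThreeIntervalExchange

variable {ε ℓ : ℝ}

/-- The letter of `{A,B,C}` labelling the interval of `T_{ε,ℓ}` that contains `x`. -/
noncomputable def letter3 (ε ℓ x : ℝ) : L3 :=
  if x < ℓ - 1 + ε then L3.A else if x < ε then L3.B else L3.C

lemma spells_sigma01 (hεℓ : ε ≤ ℓ) (hℓ : ℓ ≤ 1) (x : ℝ) :
    Spells (T2 ε) (letter2 ε) x (sigma01 (letter3 ε ℓ x)) (T3 ε ℓ x) := by
  by_cases hA : x < ℓ - 1 + ε
  · rw [letter3, T3, if_pos hA, if_pos hA]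
    exact .cons_false (by linarith) (spells_nil_iff.2 rfl)
  rw [letter3, T3, if_neg hA, if_neg hA]
  by_cases hB : x < ε
  · rw [if_pos hB, if_pos hB]
    exact .cons_false hB (.cons_true (by linarith) (spells_nil_iff.2 (by ring)))
  · rw [if_neg hB, if_neg hB]
    exact .cons_true (not_lt.1 hB) (spells_nil_iff.2 rfl)

lemma spells_sigma10 (hεℓ : 1 - ε ≤ ℓ) (x : ℝ) :
    Spells (T2 ε) (letter2 ε) (x + (1 - ℓ)) (sigma10 (letter3 ε ℓ x))
      (T3 ε ℓ x + (1 - ℓ)) := by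
  by_cases hA : x < ℓ - 1 + ε
  · rw [letter3, T3, if_pos hA, if_pos hA]
    exact .cons_false (by linarith) (spells_nil_iff.2 (by ring))
  have hshift : ε ≤ x + (1 - ℓ) := by linarith
  rw [letter3, T3, if_neg hA, if_neg hA]
  by_cases hB : x < ε
  · rw [if_pos hB, if_pos hB]
    exact .cons_true hshift (.cons_false (by linarith) (spells_nil_iff.2 (by ring)))
  · rw [if_neg hB, if_neg hB]
    exact .cons_true hshift (spells_nil_iff.2 (by ring))

theorem morphWord_sigma01_u3 (hεℓ : ε ≤ ℓ) (hℓ : ℓ ≤ 1) (x : ℝ) :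
    morphWord sigma01 (u3 ε ℓ x) = u2 ε x :=
  morphWord_itinerary (π := id) (by rintro (_ | _ | _) <;> exact List.cons_ne_nil _ _)
    (spells_sigma01 hεℓ hℓ) x

theorem morphWord_sigma10_u3 (hεℓ : 1 - ε ≤ ℓ) (x : ℝ) :
    morphWord sigma10 (u3 ε ℓ x) = u2 ε (x + (1 - ℓ)) :=
  morphWord_itinerary (π := (· + (1 - ℓ))) (by rintro (_ | _ | _) <;> exact List.cons_ne_nil _ _)
    (spells_sigma10 hεℓ) x

end ThreeIntervalExchange

/-- the images of a 3iet word with parameters `ε, ℓ` under `σ01` and `σ10`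
are Sturmian words of slope `ε`; in particular each has the same set of factors as the
Sturmian word `u_{ε,x}` for every `x ∈ [0,1)`. -/
theorem threeIet_images_sturmian_of_slope
    (ε ℓ x0 : ℝ) (hirr : Irrational ε) (h0 : 0 < ε) (h1 : ε < 1)
    (hl : max ε (1 - ε) < ℓ) (hl1 : ℓ < 1) (hx0 : x0 ∈ Set.Ico 0 ℓ) :
    (∃ y : ℝ, y ∈ Set.Ico (0:ℝ) 1 ∧ morphWord sigma01 (u3 ε ℓ x0) = u2 ε y) ∧
    (∃ y : ℝ, y ∈ Set.Ico (0:ℝ) 1 ∧ morphWord sigma10 (u3 ε ℓ x0) = u2 ε y) ∧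
    (∀ x : ℝ, x ∈ Set.Ico (0:ℝ) 1 →
      (∀ w : List Bool, IsFactor w (morphWord sigma01 (u3 ε ℓ x0)) ↔ IsFactor w (u2 ε x)) ∧
      (∀ w : List Bool, IsFactor w (morphWord sigma10 (u3 ε ℓ x0)) ↔ IsFactor w (u2 ε x))) := by
  obtain ⟨hεℓ, hεℓ'⟩ := max_lt_iff.1 hl
  have hy01 : x0 ∈ Ico (0 : ℝ) 1 := ⟨hx0.1, hx0.2.trans hl1⟩
  have hy10 : x0 + (1 - ℓ) ∈ Ico (0 : ℝ) 1 := ⟨by linarith [hx0.1], by linarith [hx0.2]⟩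
  rw [morphWord_sigma01_u3 hεℓ.le hl1.le, morphWord_sigma10_u3 hεℓ'.le]
  exact ⟨⟨x0, hy01, rfl⟩, ⟨x0 + (1 - ℓ), hy10, rfl⟩, fun x hx =>
    ⟨isFactor_u2_iff hirr h0.le h1.le hx hy01, isFactor_u2_iff hirr h0.le h1.le hx hy10⟩⟩
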